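/- Let 𝔐 be a Γ-ring satisfying conditions (i)–(iv) and let 𝔊 be a Δ-ring. Then any multiplicative isomorphism (φ, ψ) of 𝔐 onto 𝔊 — i.e., bijections φ : 𝔐 → 𝔊 and ψ : Γ → Δ with φ(xγy) = φ(x)ψ(γ)φ(y) for all x, y ∈ 𝔐 and γ ∈ Γ — is additive: φ(x + y) = φ(x) + φ(y) for all x, y ∈ 𝔐. -/

import Mathlib

/-!
Fix an index `a`. The product `x * y = x γ_a y` turns `𝔐` into a (non-unital) ring `R_a` in which
`e = e_a` is idempotent, and `φ` is multiplicative from `R_a` to the ring on `𝔊` with product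
`u ψ(γ_a) v`. Condition (i) implies that every product of the `Γ`-ring is a product of `R_a`:
`x γ y = x * (f_a(γ, y) + e γ y)` and `x δ y = (f'_a(x, δ) + x δ e) * y`. Hence (ii) and (iii) make
`R_a` faithful on the right and on the left, and (iv) implies that `p ∈ e R_a e` vanishes as soon as
`p * t = 0` for all `t ∈ e R_a (1 - e)`.

For such a ring, Martindale's Peirce-decomposition argument shows that `φ` is additive on `e R_a`
(`additive_on_corner_row`): it is additive across the two rows and across the two columns of the
Peirce decomposition, then on `e R (1 - e)` by expanding `(e + x) * (y * t + t)`, then on `e R e`.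

Every `e_a γ m δ x` lies in `e_a γ_a 𝔐`; so if `φ z = φ x + φ y`, then
`e_a γ m δ z = e_a γ m δ (x + y)` for all `a`, and (iii) gives `z = x + y`.
-/

/-- A `Γ`-ring in the sense of Barnes: abelian groups `M` and `Γ` with a triple product
`M → Γ → M → M` that is additive in each variable and associative. -/
structure GammaRing (M : Type*) (Γ : Type*) [AddCommGroup M] [AddCommGroup Γ] where
  tri : M → Γ → M → M
  add_left : ∀ x y α z, tri (x + y) α z = tri x α z + tri y α z
  add_right : ∀ x α y z, tri x α (y + z) = tri x α y + tri x α z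
  add_mid : ∀ x α β y, tri x (α + β) y = tri x α y + tri x β y
  assoc : ∀ x α y β z, tri (tri x α y) β z = tri x α (tri y β z)

namespace GammaRing

variable {M Γ : Type*} [AddCommGroup M] [AddCommGroup Γ]

/-- The product `x₀ γ₀ x₁ γ₁ ⋯ γ_{k-1} x_k` (right associated). -/
def prodF (G : GammaRing M Γ) : (k : ℕ) → (Fin (k + 1) → M) → (Fin k → Γ) → M
  | 0, x, _ => x 0
  | k + 1, x, γ => G.tri (x 0) (γ 0) (G.prodF k (fun i => x i.succ) (fun i => γ i.succ))

end GammaRing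

section Martindale

variable {R S : Type*} [NonUnitalRing R] [NonUnitalRing S]

theorem mulBij_map_zero (φ : R ≃ S) (hφ : ∀ x y, φ (x * y) = φ x * φ y) : φ 0 = 0 := by
  obtain ⟨x, hx⟩ := φ.surjective 0
  have h := hφ 0 x
  rwa [zero_mul, hx, mul_zero] at h

/-- Additivity across the rows `e R` and `(1 - e) R`: the candidate `z` with `φ z = φ u + φ t`
agrees with `u + t` after left multiplication by `R e` and by `R (1 - e)`. -/
theorem map_add_of_rows (φ : R ≃ S) (hφ : ∀ x y, φ (x * y) = φ x * φ y) (e : R)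
    (he : e * e = e) (hl : ∀ x : R, (∀ m, m * x = 0) → x = 0)
    {u t : R} (hu : e * u = u) (ht : e * t = 0) : φ (u + t) = φ u + φ t := by
  have h0 := mulBij_map_zero φ hφ
  obtain ⟨z, hz⟩ := φ.surjective (φ u + φ t)
  have h1 : ∀ a, a * e = a → a * z = a * u := by
    intro a ha
    apply φ.injective
    have h2 : a * t = 0 := by rw [← ha, mul_assoc, ht, mul_zero]
    rw [hφ, hz, mul_add, ← hφ, ← hφ, h2, h0, add_zero]
  have h2 : ∀ a, a * e = 0 → a * z = a * t := by
    intro a ha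
    apply φ.injective
    have h2 : a * u = 0 := by rw [← hu, ← mul_assoc, ha, zero_mul]
    rw [hφ, hz, mul_add, ← hφ, ← hφ, h2, h0, zero_add]
  have h3 : z - (u + t) = 0 := by
    apply hl
    intro m
    have k1 := h1 (m * e) (by rw [mul_assoc, he])
    have k2 := h2 (m - m * e) (by rw [sub_mul, mul_assoc, he, sub_self])
    simp only [sub_mul, mul_assoc, hu, ht, mul_zero, sub_zero] at k1 k2
    rw [mul_sub, mul_add, ← k2, k1]
    abel
  rw [← hz, sub_eq_zero.mp h3]

/-- Additivity across the columns `R e` and `R (1 - e)`, dual to `map_add_of_rows`. -/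
theorem map_add_of_columns (φ : R ≃ S) (hφ : ∀ x y, φ (x * y) = φ x * φ y) (e : R)
    (he : e * e = e) (hr : ∀ x : R, (∀ m, x * m = 0) → x = 0)
    {u t : R} (hu : u * e = u) (ht : t * e = 0) : φ (u + t) = φ u + φ t := by
  have h0 := mulBij_map_zero φ hφ
  obtain ⟨z, hz⟩ := φ.surjective (φ u + φ t)
  have h1 : ∀ a, e * a = a → z * a = u * a := by
    intro a ha
    apply φ.injective
    have h2 : t * a = 0 := by rw [← ha, ← mul_assoc, ht, zero_mul]
    rw [hφ, hz, add_mul, ← hφ, ← hφ, h2, h0, add_zero]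
  have h2 : ∀ a, e * a = 0 → z * a = t * a := by
    intro a ha
    apply φ.injective
    have h2 : u * a = 0 := by rw [← hu, mul_assoc, ha, mul_zero]
    rw [hφ, hz, add_mul, ← hφ, ← hφ, h2, h0, zero_add]
  have h3 : z - (u + t) = 0 := by
    apply hr
    intro m
    have k1 := h1 (e * m) (by rw [← mul_assoc, he])
    have k2 := h2 (m - e * m) (by rw [mul_sub, ← mul_assoc, he, sub_self])
    simp only [mul_sub, ← mul_assoc, hu, ht, zero_mul, sub_zero] at k1 k2
    rw [sub_mul, add_mul, ← k2, k1]
    abel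
  rw [← hz, sub_eq_zero.mp h3]

/-- Additivity on `e R (1 - e)`, where one summand may even lie in `R (1 - e)`.
For `t ∈ (1 - e) R` one has `(e + x) * (y * t + t) = y * t + x * t`, and `φ` is additive on
both factors of the product. -/
theorem map_add_offDiag (φ : R ≃ S) (hφ : ∀ x y, φ (x * y) = φ x * φ y) (e : R)
    (he : e * e = e) (hl : ∀ x : R, (∀ m, m * x = 0) → x = 0)
    (hr : ∀ x : R, (∀ m, x * m = 0) → x = 0)
    {x y : R} (hx' : x * e = 0) (hy : e * y = y) (hy' : y * e = 0) :
    φ (x + y) = φ x + φ y := by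
  have h0 := mulBij_map_zero φ hφ
  obtain ⟨z, hz⟩ := φ.surjective (φ x + φ y)
  have h1 : ∀ t, e * t = t → z * t = 0 := by
    intro t ht
    apply φ.injective
    have k1 : x * t = 0 := by rw [← ht, ← mul_assoc, hx', zero_mul]
    have k2 : y * t = 0 := by rw [← ht, ← mul_assoc, hy', zero_mul]
    rw [hφ, hz, add_mul, ← hφ, ← hφ, k1, k2, h0, add_zero]
  have h2 : ∀ t, e * t = 0 → z * t = (x + y) * t := by
    intro t ht
    apply φ.injective
    have hyt : e * (y * t) = y * t := by rw [← mul_assoc, hy]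
    have hxyt : x * (y * t) = 0 := by rw [← hyt, ← mul_assoc, hx', zero_mul]
    have k : (x + y) * t = (e + x) * (y * t + t) := by
      rw [add_mul x y, add_mul e x, mul_add, mul_add, hyt, ht, hxyt, add_zero, zero_add, add_comm]
    rw [k, hφ (e + x), map_add_of_columns φ hφ e he hr he hx', map_add_of_rows φ hφ e he hl hyt ht,
      hφ, hz, add_mul, add_mul, mul_add, mul_add, ← hφ, ← hφ, ← hφ, ← hφ, ← hφ, hyt, ht, hxyt, h0,
      add_zero, zero_add, add_comm]
  have h3 : z - (x + y) = 0 := by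
    apply hr
    intro m
    have k1 := h1 (e * m) (by rw [← mul_assoc, he])
    have k2 := h2 (m - e * m) (by rw [mul_sub, ← mul_assoc, he, sub_self])
    rw [mul_sub, mul_sub, k1, sub_zero, ← mul_assoc (x + y), add_mul x y e, hx', hy', add_zero,
      zero_mul, sub_zero] at k2
    rw [sub_mul, k2, sub_self]
  rw [← hz, sub_eq_zero.mp h3]

/-- Additivity on `e R e`: the candidate `z` again lies in `e R e`, and it agrees with `x + y`
after right multiplication by `e R (1 - e)`, where `φ` is additive. -/
theorem map_add_diag (φ : R ≃ S) (hφ : ∀ x y, φ (x * y) = φ x * φ y) (e : R)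
    (he : e * e = e) (hl : ∀ x : R, (∀ m, m * x = 0) → x = 0)
    (hr : ∀ x : R, (∀ m, x * m = 0) → x = 0)
    (hd : ∀ p : R, e * p = p → p * e = p → (∀ t, e * t = t → t * e = 0 → p * t = 0) → p = 0)
    {x y : R} (hx : e * x = x) (hx' : x * e = x) (hy : e * y = y) (hy' : y * e = y) :
    φ (x + y) = φ x + φ y := by
  obtain ⟨z, hz⟩ := φ.surjective (φ x + φ y)
  have hz1 : e * z = z := by
    apply φ.injective
    rw [hφ, hz, mul_add, ← hφ, ← hφ, hx, hy]
  have hz2 : z * e = z := by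
    apply φ.injective
    rw [hφ, hz, add_mul, ← hφ, ← hφ, hx', hy']
  have h3 : z - (x + y) = 0 := by
    apply hd
    · rw [mul_sub, mul_add, hz1, hx, hy]
    · rw [sub_mul, add_mul, hz2, hx', hy']
    · intro t _ ht'
      have k : z * t = x * t + y * t := by
        apply φ.injective
        rw [map_add_offDiag φ hφ e he hl hr (x := x * t) (y := y * t)
          (by rw [mul_assoc, ht', mul_zero]) (by rw [← mul_assoc, hy])
          (by rw [mul_assoc, ht', mul_zero]), hφ, hz, add_mul, hφ, hφ]
      rw [sub_mul, add_mul, k, sub_self]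
  rw [← hz, sub_eq_zero.mp h3]

/-- A multiplicative bijection is additive on the row `e R` when `R` is faithful on both sides and
`p ∈ e R e` is determined by its products with `e R (1 - e)`. -/
theorem additive_on_corner_row (φ : R ≃ S) (hφ : ∀ x y, φ (x * y) = φ x * φ y) (e : R)
    (he : e * e = e) (hl : ∀ x : R, (∀ m, m * x = 0) → x = 0)
    (hr : ∀ x : R, (∀ m, x * m = 0) → x = 0)
    (hd : ∀ p : R, e * p = p → p * e = p → (∀ t, e * t = t → t * e = 0 → p * t = 0) → p = 0)
    {x y : R} (hx : e * x = x) (hy : e * y = y) : φ (x + y) = φ x + φ y := by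
  have d1 : ∀ w : R, (w * e) * e = w * e := fun w => by rw [mul_assoc, he]
  have d2 : ∀ w : R, (w - w * e) * e = 0 := fun w => by rw [sub_mul, d1, sub_self]
  have d3 : ∀ w : R, e * w = w → e * (w * e) = w * e := fun w h => by rw [← mul_assoc, h]
  have d4 : ∀ w : R, e * w = w → e * (w - w * e) = w - w * e := fun w h => by
    rw [mul_sub, d3 w h, h]
  have split : ∀ w : R, φ w = φ (w * e) + φ (w - w * e) := fun w => by
    rw [← map_add_of_columns φ hφ e he hr (d1 w) (d2 w), add_sub_cancel]
  have k : (x + y) - (x + y) * e = (x - x * e) + (y - y * e) := by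
    rw [add_mul]
    abel
  rw [split (x + y), k, add_mul, map_add_diag φ hφ e he hl hr hd (d3 x hx) (d1 x) (d3 y hy) (d1 y),
    map_add_offDiag φ hφ e he hl hr (d2 x) (d4 y hy) (d2 y), split x, split y]
  abel

end Martindale

namespace GammaRing

variable {M Γ : Type*} [AddCommGroup M] [AddCommGroup Γ]

/-- The non-unital ring on `M` with product `x * y = x γ y` for a fixed `γ`. -/
abbrev ringAt (G : GammaRing M Γ) (γ : Γ) : NonUnitalRing M :=
  { ‹AddCommGroup M› with
    mul := fun x y => G.tri x γ y
    left_distrib := fun x y z => G.add_right x γ y z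
    right_distrib := fun x y z => G.add_left x y γ z
    zero_mul := fun x => by
      have h := G.add_left 0 0 γ x
      rw [add_zero] at h
      exact left_eq_add.mp h
    mul_zero := fun x => by
      have h := G.add_right x γ 0 0
      rw [add_zero] at h
      exact left_eq_add.mp h
    mul_assoc := fun x y z => G.assoc x γ y γ z }

theorem tri_zero (G : GammaRing M Γ) (x : M) (γ : Γ) : G.tri x γ 0 = 0 := by
  have h := G.add_right x γ 0 0
  rw [add_zero] at h
  exact left_eq_add.mp h

theorem tri_sub (G : GammaRing M Γ) (x : M) (γ : Γ) (y z : M) :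
    G.tri x γ (y - z) = G.tri x γ y - G.tri x γ z := by
  rw [eq_sub_iff_add_eq, ← G.add_right, sub_add_cancel]

theorem sub_tri (G : GammaRing M Γ) (x y : M) (γ : Γ) (z : M) :
    G.tri (x - y) γ z = G.tri x γ z - G.tri y γ z := by
  rw [eq_sub_iff_add_eq, ← G.add_left, sub_add_cancel]

end GammaRing

/-- Any multiplicative isomorphism of a `Γ`-ring satisfying (i)-(iv) onto an arbitrary
`Δ`-ring is additive. -/
theorem gammaRing_mulIso_additive
    {M Γ Λ : Type*} [AddCommGroup M] [AddCommGroup Γ] [Nonempty Λ]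
    (G : GammaRing M Γ)
    (e : Λ → M) (γs : Λ → Γ)
    (hidem : ∀ a, G.tri (e a) (γs a) (e a) = e a)
    -- condition (i)
    (F : Λ → Γ → M → M) (F' : Λ → M → Γ → M)
    (hFadd : ∀ a γ x y, F a γ (x + y) = F a γ x + F a γ y)
    (hF'add : ∀ a x y γ, F' a (x + y) γ = F' a x γ + F' a y γ)
    (hFγ : ∀ a x, F a (γs a) x = x - G.tri (e a) (γs a) x)
    (hF'γ : ∀ a x, F' a x (γs a) = x - G.tri x (γs a) (e a))
    (hFmid : ∀ a x y β γ, G.tri (F' a x β) γ y = G.tri x β (F a γ y))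
    -- condition (ii)
    (hii : ∀ x : M, (∀ (γ : Γ) (m : M), G.tri x γ m = 0) → x = 0)
    -- condition (iii)
    (hiii : ∀ x : M, (∀ (a : Λ) (γ δ : Γ) (m : M), G.tri (G.tri (e a) γ m) δ x = 0) → x = 0)
    -- condition (iv)
    (hiv : ∀ (a : Λ) (x : M),
      (∀ (γ δ : Γ) (m : M),
        F' a (G.tri (G.tri (G.tri (e a) (γs a) x) (γs a) (e a)) γ m) δ = 0) →
      G.tri (G.tri (e a) (γs a) x) (γs a) (e a) = 0)
    {G' Δ : Type*} [AddCommGroup G'] [AddCommGroup Δ]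
    (H : GammaRing G' Δ)
    (φ : M ≃ G') (ψ : Γ ≃ Δ)
    (hmul : ∀ (x : M) (γ : Γ) (y : M),
      φ (G.tri x γ y) = H.tri (φ x) (ψ γ) (φ y)) :
    ∀ x y : M, φ (x + y) = φ x + φ y := by
  -- The two identities reducing arbitrary products to products with middle factor `γ_a`.
  have hright : ∀ a x γ y, G.tri x γ y = G.tri x (γs a) (F a γ y + G.tri (e a) γ y) := by
    intro a x γ y
    rw [G.add_right, ← hFmid, hF'γ, G.sub_tri, G.assoc, sub_add_cancel]
  have hleft : ∀ a x δ y, G.tri x δ y = G.tri (F' a x δ + G.tri x δ (e a)) (γs a) y := by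
    intro a x δ y
    rw [G.add_left, hFmid, hFγ, G.tri_sub, G.assoc, sub_add_cancel]
  have hF'e : ∀ a x δ, G.tri (F' a x δ) (γs a) (e a) = 0 := by
    intro a x δ
    rw [hFmid, hFγ, hidem, sub_self, G.tri_zero]
  -- `f'_a(x γ m, δ)` is again a product with left factor `x`; checked against all `η y` by (ii).
  have hF'mul : ∀ a x γ m δ, F' a (G.tri x γ m) δ =
      G.tri x (γs a) (F' a (F a γ m + G.tri (e a) γ m) δ) := by
    intro a x γ m δ
    rw [← sub_eq_zero]
    apply hii
    intro η y
    rw [G.sub_tri, hFmid, G.assoc x (γs a), hFmid, ← G.assoc x (γs a), ← hright, sub_self]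
  have hrow : ∀ a x y, G.tri (e a) (γs a) x = x → G.tri (e a) (γs a) y = y →
      φ (x + y) = φ x + φ y := by
    intro a x y hx hy
    refine @additive_on_corner_row M G' (G.ringAt (γs a)) (H.ringAt (ψ (γs a))) φ
      (fun x y => hmul x (γs a) y) (e a) (hidem a) ?_ ?_ ?_ x y hx hy
    · intro z hz
      apply hiii
      intro b γ δ m
      rw [hleft a]
      exact hz _
    · intro z hz
      apply hii
      intro γ m
      rw [hright a]
      exact hz _
    · intro p hp hp' ht
      have hp1 : G.tri (e a) (γs a) p = p := hp
      have hp2 : G.tri p (γs a) (e a) = p := hp'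
      have key := hiv a p
      rw [hp1, hp2] at key
      apply key
      intro γ δ m
      rw [hF'mul]
      generalize hn : F' a (F a γ m + G.tri (e a) γ m) δ = n
      have hne : G.tri n (γs a) (e a) = 0 := by rw [← hn, hF'e]
      have h := ht (G.tri (e a) (γs a) n)
        (show G.tri (e a) (γs a) (G.tri (e a) (γs a) n) = _ by rw [← G.assoc, hidem])
        (show G.tri (G.tri (e a) (γs a) n) (γs a) (e a) = 0 by
          rw [G.assoc, hne, G.tri_zero])
      change G.tri p (γs a) (G.tri (e a) (γs a) n) = 0 at h
      rwa [← G.assoc, hp2] at h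
  intro x y
  obtain ⟨z, hz⟩ := φ.surjective (φ x + φ y)
  have h3 : z - (x + y) = 0 := by
    apply hiii
    intro a γ δ m
    have hmem : ∀ w, G.tri (e a) (γs a) (G.tri (G.tri (e a) γ m) δ w) =
        G.tri (G.tri (e a) γ m) δ w := by
      intro w
      rw [← G.assoc, ← G.assoc, hidem]
    have k : G.tri (G.tri (e a) γ m) δ z =
        G.tri (G.tri (e a) γ m) δ x + G.tri (G.tri (e a) γ m) δ y := by
      apply φ.injective
      rw [hrow a _ _ (hmem x) (hmem y), hmul _ δ z, hz, H.add_right, ← hmul, ← hmul]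
    rw [G.tri_sub, G.add_right, k, sub_self]
  rw [← hz, sub_eq_zero.mp h3]
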